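/- Let k_z < K_r, K² = K_r² − k_z², and F smooth with F_ss + F_yy + K_r² F = 0. Then p = cosh(k_z z)·F(x−Vt,y) + (β(cos(Kz)M − 1)/K² − V)·y satisfies the Charney–Obukhov equation for any constant M, and the boundary operator B[p] = p_{zt} − p_y p_{zx} + p_x p_{zy} equals −(∂_x F)(x−Vt,y)·(β/K²)·(sinh(k_z z)k_z cos(Kz)M − sinh(k_z z)k_z + cosh(k_z z)K sin(Kz)M). -/

import Mathlib

open Real

noncomputable section

/-- Partial derivative in `t` of `p t x y z`. -/
def pdt (p : ℝ → ℝ → ℝ → ℝ → ℝ) (t x y z : ℝ) : ℝ := deriv (fun t' => p t' x y z) t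
/-- Partial derivative in `x`. -/
def pdx (p : ℝ → ℝ → ℝ → ℝ → ℝ) (t x y z : ℝ) : ℝ := deriv (fun x' => p t x' y z) x
/-- Partial derivative in `y`. -/
def pdy (p : ℝ → ℝ → ℝ → ℝ → ℝ) (t x y z : ℝ) : ℝ := deriv (fun y' => p t x y' z) y
/-- Partial derivative in `z`. -/
def pdz (p : ℝ → ℝ → ℝ → ℝ → ℝ) (t x y z : ℝ) : ℝ := deriv (fun z' => p t x y z') z

/-- Spatial Laplacian in `(x, y, z)`. -/
def lap3d (p : ℝ → ℝ → ℝ → ℝ → ℝ) (t x y z : ℝ) : ℝ :=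
  pdx (pdx p) t x y z + pdy (pdy p) t x y z + pdz (pdz p) t x y z

/-- Charney–Obukhov operator. -/
def CO (β : ℝ) (p : ℝ → ℝ → ℝ → ℝ → ℝ) (t x y z : ℝ) : ℝ :=
  pdt (lap3d p) t x y z + pdx p t x y z * pdy (lap3d p) t x y z
    - pdy p t x y z * pdx (lap3d p) t x y z + β * pdx p t x y z

/-- Boundary condition operator `p_{zt} − p_y p_{zx} + p_x p_{zy}`. -/
def Bop (p : ℝ → ℝ → ℝ → ℝ → ℝ) (t x y z : ℝ) : ℝ :=
  pdt (pdz p) t x y z - pdy p t x y z * pdx (pdz p) t x y z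
    + pdx p t x y z * pdy (pdz p) t x y z

/-- Partial derivative in the first variable `s` of a two-variable function. -/
def dS (F : ℝ → ℝ → ℝ) (s y : ℝ) : ℝ := deriv (fun s' => F s' y) s
/-- Partial derivative in the second variable `y` of a two-variable function. -/
def dY (F : ℝ → ℝ → ℝ) (s y : ℝ) : ℝ := deriv (fun y' => F s y') y

/-- Smoothness of a two-variable function. -/
def Smooth2 (F : ℝ → ℝ → ℝ) : Prop := ContDiff ℝ (⊤ : ℕ∞) (fun q : ℝ × ℝ => F q.1 q.2)

/-!
Advection by the flow of `p = a(z) F(x - Vt, y) + g(z) y` acts on a field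
`q = b(z) F(x - Vt, y) + h(z) y` built on the same `F` in a particularly simple way: the products
`F_s F_y` cancel and `q_t + p_x q_y - p_y q_x = F_s (a h - b (g + V))`.
Both operators are of this form. For the boundary operator `q = p_z`, so `b = a'` and `h = g'`.
For the Charney–Obukhov operator `q = Δp`; if `ΔF = -κ F` and `a'' = (κ - μ) a`, then `b = -μ a`
and `h = g''`, and the equation reduces to the linear ODE `g'' = -μ (g + V) - β`.
-/

/-- The travelling wave `a(z) F(x - Vt, y)` of vertical profile `a`, superposed on the zonal shear
flow with stream function `g(z) y`. -/
def shearWave (a g : ℝ → ℝ) (V : ℝ) (F : ℝ → ℝ → ℝ) (t x y z : ℝ) : ℝ :=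
  a z * F (x - V * t) y + g z * y

/-- The material derivative `q_t + p_x q_y - p_y q_x` of `q` along the horizontal flow with stream
function `p`. -/
def materialDeriv (p q : ℝ → ℝ → ℝ → ℝ → ℝ) (t x y z : ℝ) : ℝ :=
  pdt q t x y z + pdx p t x y z * pdy q t x y z - pdy p t x y z * pdx q t x y z

theorem CO_eq_materialDeriv_lap3d (β : ℝ) (p : ℝ → ℝ → ℝ → ℝ → ℝ) (t x y z : ℝ) :
    CO β p t x y z = materialDeriv p (lap3d p) t x y z + β * pdx p t x y z :=
  rfl

theorem Bop_eq_materialDeriv_pdz (p : ℝ → ℝ → ℝ → ℝ → ℝ) (t x y z : ℝ) :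
    Bop p t x y z = materialDeriv p (pdz p) t x y z := by
  unfold Bop materialDeriv
  ring

section ShearWave

variable {F : ℝ → ℝ → ℝ} {a a' g g' : ℝ → ℝ}

theorem pdt_shearWave (a g : ℝ → ℝ) (V : ℝ) (F : ℝ → ℝ → ℝ) :
    pdt (shearWave a g V F) = shearWave (-V • a) 0 V (dS F) := by
  funext t x y z
  have hchain : deriv (fun t' => F (x - V * t') y) t = -(V * dS F (x - V * t) y) := by
    rw [deriv_comp_mul_left V (fun u => F (x - u) y), deriv_comp_const_sub (fun s => F s y),
      smul_eq_mul, mul_neg, dS]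
  simp only [pdt, shearWave, deriv_add_const, deriv_const_mul_field, hchain, Pi.smul_apply,
    Pi.zero_apply, smul_eq_mul]
  ring

theorem pdx_shearWave (a g : ℝ → ℝ) (V : ℝ) (F : ℝ → ℝ → ℝ) :
    pdx (shearWave a g V F) = shearWave a 0 V (dS F) := by
  funext t x y z
  simp only [pdx, shearWave, deriv_add_const, deriv_const_mul_field, Pi.zero_apply, zero_mul,
    add_zero, dS, deriv_comp_sub_const (fun s => F s y)]

theorem pdy_shearWave (hF : ∀ s, Differentiable ℝ (F s)) (a g : ℝ → ℝ) (V : ℝ) :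
    pdy (shearWave a g V F) = fun t x y z => a z * dY F (x - V * t) y + g z := by
  funext t x y z
  have hwave := (hF (x - V * t) y).hasDerivAt.const_mul (a z)
  exact (hwave.add (hasDerivAt_const_mul (g z))).deriv

theorem pdy_pdy_shearWave (hF : ∀ s, Differentiable ℝ (F s)) (a g : ℝ → ℝ) (V : ℝ) :
    pdy (pdy (shearWave a g V F)) = shearWave a 0 V (dY (dY F)) := by
  rw [pdy_shearWave hF]
  funext t x y z
  simp only [pdy, shearWave, deriv_add_const, deriv_const_mul_field, Pi.zero_apply, zero_mul,
    add_zero]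
  rfl

theorem pdz_shearWave (ha : ∀ z, HasDerivAt a (a' z) z) (hg : ∀ z, HasDerivAt g (g' z) z)
    (V : ℝ) (F : ℝ → ℝ → ℝ) :
    pdz (shearWave a g V F) = shearWave a' g' V F := by
  funext t x y z
  exact (((ha z).mul_const _).add ((hg z).mul_const y)).deriv

theorem lap3d_shearWave {a'' g'' : ℝ → ℝ} (hF : ∀ s, Differentiable ℝ (F s))
    (ha : ∀ z, HasDerivAt a (a' z) z) (ha' : ∀ z, HasDerivAt a' (a'' z) z)
    (hg : ∀ z, HasDerivAt g (g' z) z) (hg' : ∀ z, HasDerivAt g' (g'' z) z) (V t x y z : ℝ) :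
    lap3d (shearWave a g V F) t x y z =
      a z * (dS (dS F) (x - V * t) y + dY (dY F) (x - V * t) y)
        + shearWave a'' g'' V F t x y z := by
  rw [lap3d, pdx_shearWave, pdx_shearWave, pdy_pdy_shearWave hF, pdz_shearWave ha hg,
    pdz_shearWave ha' hg']
  simp only [shearWave, Pi.zero_apply]
  ring

theorem lap3d_shearWave_of_helmholtz {κ μ : ℝ} {g'' : ℝ → ℝ} (hF : ∀ s, Differentiable ℝ (F s))
    (hHelm : ∀ s y, dS (dS F) s y + dY (dY F) s y + κ * F s y = 0)
    (ha : ∀ z, HasDerivAt a (a' z) z) (ha' : ∀ z, HasDerivAt a' ((κ - μ) * a z) z)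
    (hg : ∀ z, HasDerivAt g (g' z) z) (hg' : ∀ z, HasDerivAt g' (g'' z) z) (V : ℝ) :
    lap3d (shearWave a g V F) = shearWave (-μ • a) g'' V F := by
  funext t x y z
  rw [lap3d_shearWave hF ha ha' hg hg']
  simp only [shearWave, Pi.smul_apply, smul_eq_mul]
  linear_combination a z * hHelm (x - V * t) y

theorem materialDeriv_shearWave (hF : ∀ s, Differentiable ℝ (F s)) (a g b h : ℝ → ℝ)
    (V t x y z : ℝ) :
    materialDeriv (shearWave a g V F) (shearWave b h V F) t x y z =
      dS F (x - V * t) y * (a z * h z - b z * (g z + V)) := by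
  rw [materialDeriv, pdt_shearWave, pdx_shearWave, pdx_shearWave, pdy_shearWave hF,
    pdy_shearWave hF]
  simp only [shearWave, Pi.smul_apply, Pi.zero_apply, smul_eq_mul]
  ring

theorem CO_shearWave_eq_zero {κ μ V β : ℝ} (hF : ∀ s, Differentiable ℝ (F s))
    (hHelm : ∀ s y, dS (dS F) s y + dY (dY F) s y + κ * F s y = 0)
    (ha : ∀ z, HasDerivAt a (a' z) z) (ha' : ∀ z, HasDerivAt a' ((κ - μ) * a z) z)
    (hg : ∀ z, HasDerivAt g (g' z) z) (hg' : ∀ z, HasDerivAt g' (-μ * (g z + V) - β) z)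
    (t x y z : ℝ) :
    CO β (shearWave a g V F) t x y z = 0 := by
  rw [CO_eq_materialDeriv_lap3d, lap3d_shearWave_of_helmholtz hF hHelm ha ha' hg hg',
    materialDeriv_shearWave hF, pdx_shearWave]
  simp only [shearWave, Pi.smul_apply, Pi.zero_apply, smul_eq_mul]
  ring

theorem Bop_shearWave (hF : ∀ s, Differentiable ℝ (F s)) (ha : ∀ z, HasDerivAt a (a' z) z)
    (hg : ∀ z, HasDerivAt g (g' z) z) (V t x y z : ℝ) :
    Bop (shearWave a g V F) t x y z =
      dS F (x - V * t) y * (a z * g' z - a' z * (g z + V)) := by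
  rw [Bop_eq_materialDeriv_pdz, pdz_shearWave ha hg, materialDeriv_shearWave hF]

end ShearWave

theorem hasDerivAt_cosh_const_mul (k z : ℝ) :
    HasDerivAt (fun z => cosh (k * z)) (k * sinh (k * z)) z :=
  (hasDerivAt_const_mul k).cosh.congr_deriv (mul_comm _ _)

theorem hasDerivAt_const_mul_sinh_const_mul (k z : ℝ) :
    HasDerivAt (fun z => k * sinh (k * z)) (k ^ 2 * cosh (k * z)) z :=
  ((hasDerivAt_const_mul k).sinh.const_mul k).congr_deriv (by ring)

/-- The coefficient of `y` in Solution 7: a solution of `g'' = -K² (g + V) - β` that is even in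
`z`, with `M` fixing its amplitude. -/
def shearProfile (β K V M z : ℝ) : ℝ :=
  β * (cos (K * z) * M - 1) / K ^ 2 - V

theorem hasDerivAt_shearProfile (β K V M z : ℝ) :
    HasDerivAt (shearProfile β K V M) (-(β * M / K * sin (K * z))) z := by
  have hcos : HasDerivAt (fun z => cos (K * z)) (-sin (K * z) * K) z :=
    (hasDerivAt_const_mul K).cos
  refine (((((hcos.mul_const M).sub_const 1).const_mul β).div_const (K ^ 2)).sub_const
    V).congr_deriv ?_
  field_simp

theorem hasDerivAt_deriv_shearProfile {K : ℝ} (hK : K ≠ 0) (β V M z : ℝ) :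
    HasDerivAt (fun z => -(β * M / K * sin (K * z)))
      (-K ^ 2 * (shearProfile β K V M z + V) - β) z := by
  have hsin : HasDerivAt (fun z => sin (K * z)) (cos (K * z) * K) z :=
    (hasDerivAt_const_mul K).sin
  refine (hsin.const_mul (β * M / K)).neg.congr_deriv ?_
  unfold shearProfile
  field_simp
  ring

theorem stmt_13_general {F : ℝ → ℝ → ℝ} {a a' g g' : ℝ → ℝ} {κ μ V β : ℝ}
    (hF : ContDiff ℝ 2 (Function.uncurry F))
    (hHelm : ∀ s y, dS (dS F) s y + dY (dY F) s y + κ * F s y = 0)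
    (ha : ∀ z, HasDerivAt a (a' z) z) (ha' : ∀ z, HasDerivAt a' ((κ - μ) * a z) z)
    (hg : ∀ z, HasDerivAt g (g' z) z) (hg' : ∀ z, HasDerivAt g' (-μ * (g z + V) - β) z) :
    (∀ t x y z, CO β (shearWave a g V F) t x y z = 0) ∧
    (∀ t x y z, Bop (shearWave a g V F) t x y z =
      dS F (x - V * t) y * (a z * g' z - a' z * (g z + V))) := by
  have hFy : ∀ s, Differentiable ℝ (F s) := fun s =>
    (hF.differentiable two_ne_zero).comp (differentiable_const s |>.prodMk differentiable_id)
  exact ⟨CO_shearWave_eq_zero hFy hHelm ha ha' hg hg', Bop_shearWave hFy ha hg V⟩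

/-- Solution 7 satisfies the Charney–Obukhov equation, and
the boundary operator on it. -/
theorem stmt_13 (F : ℝ → ℝ → ℝ) (kz Kr K V β M : ℝ)
    (hkz0 : 0 < kz) (hkz : kz < Kr) (hK : K ^ 2 = Kr ^ 2 - kz ^ 2) (hK0 : K ≠ 0)
    (hF : Smooth2 F)
    (hHelm : ∀ s y, dS (dS F) s y + dY (dY F) s y + Kr ^ 2 * F s y = 0) :
    (∀ t x y z, CO β
      (fun t x y z => Real.cosh (kz * z) * F (x - V * t) y
        + (β * (Real.cos (K * z) * M - 1) / K ^ 2 - V) * y)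
      t x y z = 0) ∧
    (∀ t x y z, Bop
      (fun t x y z => Real.cosh (kz * z) * F (x - V * t) y
        + (β * (Real.cos (K * z) * M - 1) / K ^ 2 - V) * y)
      t x y z = -(dS F (x - V * t) y) * (β / K ^ 2)
        * (Real.sinh (kz * z) * kz * Real.cos (K * z) * M
          - Real.sinh (kz * z) * kz
          + Real.cosh (kz * z) * K * Real.sin (K * z) * M)) := by
  have ha' (z : ℝ) : HasDerivAt (fun z => kz * sinh (kz * z))
      ((Kr ^ 2 - K ^ 2) * cosh (kz * z)) z := by
    simpa only [hK, sub_sub_cancel] using hasDerivAt_const_mul_sinh_const_mul kz z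
  obtain ⟨hCO, hBop⟩ := stmt_13_general (contDiff_infty.mp hF 2) hHelm
    (hasDerivAt_cosh_const_mul kz) ha' (hasDerivAt_shearProfile β K V M)
    (hasDerivAt_deriv_shearProfile hK0 β V M)
  refine ⟨hCO, fun t x y z => (hBop t x y z).trans ?_⟩
  unfold shearProfile
  field_simp
  ring
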